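/- arXiv:math/0702651 — 2 statements merged into one kernel-verified Lean document; each statement's English description precedes it below -/
import Mathlib

section
/- There is a lattice embedding of H_ω into H_2, i.e., an injective map from the free Heyting algebra on countably many generators into the free Heyting algebra on two generators that preserves ∧ and ∨. -/
/-!
The embedding is induced by a substitution `tr`: it replaces `⊥` by a formula `a` in the two
variables `x, y` and the `n`-th variable by `θₙ ∨ a`, and commutes with `∧, ∨, →, ⊤`.  Since every
`tr φ` is implied by `a`, the interval `[a, ⊤]` of `H_2` is a Heyting algebra with bottom `a`, so
`tr` respects intuitionistic consequence (`Prov.tr`) and descends to a map preserving `∧` and `∨`.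

Injectivity is shown with one Kripke model for two variables (`World`).  It contains the
canonical model of intuitionistic logic in countably many variables (prime theories), and
each prime theory `S` sees, besides the larger prime theories:
* a maximal point `e` forcing `x` and `y`, and a maximal point `beta` forcing only `y`;
* the Rieger-Nishimura ladder in the variable `x`, on which `y` fails;
* the point `c n`, for each `n` such that the `n`-th variable is not in `S`; this point sees `beta`
  and exactly the rungs `0, …, n + 2` of the ladder.

The formula `a = ¬(x ∧ y) ∨ ¬¬y` holds exactly outside the canonical part.  The formula
`θₙ` detects the number of rungs, so that among the points outside the canonical part it fails
only at `c n`, and it fails at a prime theory `S` iff `S` sees `c n`.  Hence a prime theory `S`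
forces `tr φ` iff `φ ∈ S` (`force_tr`), and non-entailments `φ ⊬ ψ`, being witnessed by prime
theories, are preserved by `tr`.
-/

/-- Propositional formulas over a set `V` of variables, built from `∧, ∨, →, ⊥, ⊤`.
`¬φ` is the abbreviation `φ → ⊥`. -/
inductive PropForm (V : Type) : Type
  | var : V → PropForm V
  | bot : PropForm V
  | top : PropForm V
  | and : PropForm V → PropForm V → PropForm V
  | or : PropForm V → PropForm V → PropForm V
  | imp : PropForm V → PropForm V → PropForm V

/-- A natural-deduction style consequence relation.  When the parameter `cl` is `False`
this is exactly the consequence relation `⊢` of intuitionistic propositional logic;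
when `cl` is `True` the rule of excluded middle becomes available and it is the
consequence relation `⊢_C` of classical propositional logic. -/
inductive Prov {V : Type} (cl : Prop) : Set (PropForm V) → PropForm V → Prop
  | ax : ∀ {Γ : Set (PropForm V)} {φ}, φ ∈ Γ → Prov cl Γ φ
  | topI : ∀ {Γ}, Prov cl Γ .top
  | botE : ∀ {Γ φ}, Prov cl Γ .bot → Prov cl Γ φ
  | andI : ∀ {Γ φ ψ}, Prov cl Γ φ → Prov cl Γ ψ → Prov cl Γ (.and φ ψ)
  | andE1 : ∀ {Γ φ ψ}, Prov cl Γ (.and φ ψ) → Prov cl Γ φ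
  | andE2 : ∀ {Γ φ ψ}, Prov cl Γ (.and φ ψ) → Prov cl Γ ψ
  | orI1 : ∀ {Γ φ ψ}, Prov cl Γ φ → Prov cl Γ (.or φ ψ)
  | orI2 : ∀ {Γ φ ψ}, Prov cl Γ ψ → Prov cl Γ (.or φ ψ)
  | orE : ∀ {Γ φ ψ χ}, Prov cl Γ (.or φ ψ) → Prov cl (insert φ Γ) χ →
      Prov cl (insert ψ Γ) χ → Prov cl Γ χ
  | impI : ∀ {Γ φ ψ}, Prov cl (insert φ Γ) ψ → Prov cl Γ (.imp φ ψ)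
  | impE : ∀ {Γ φ ψ}, Prov cl Γ (.imp φ ψ) → Prov cl Γ φ → Prov cl Γ ψ
  | em : ∀ {Γ φ}, cl → Prov cl Γ (.or φ (.imp φ .bot))

/-- Intuitionistic consequence `Γ ⊢ φ`. -/
abbrev IProv {V : Type} (Γ : Set (PropForm V)) (φ : PropForm V) : Prop := Prov False Γ φ

/-- Classical consequence `Γ ⊢_C φ`. -/
abbrev CProv {V : Type} (Γ : Set (PropForm V)) (φ : PropForm V) : Prop := Prov True Γ φ

theorem Prov.mono {V : Type} {cl : Prop} {Γ : Set (PropForm V)} {φ : PropForm V}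
    (h : Prov cl Γ φ) : ∀ {Δ : Set (PropForm V)}, Γ ⊆ Δ → Prov cl Δ φ := by
  induction h with
  | ax hmem => intro Δ hsub; exact Prov.ax (hsub hmem)
  | topI => intro Δ _; exact Prov.topI
  | botE _ ih => intro Δ hsub; exact Prov.botE (ih hsub)
  | andI _ _ ih1 ih2 => intro Δ hsub; exact Prov.andI (ih1 hsub) (ih2 hsub)
  | andE1 _ ih => intro Δ hsub; exact Prov.andE1 (ih hsub)
  | andE2 _ ih => intro Δ hsub; exact Prov.andE2 (ih hsub)
  | orI1 _ ih => intro Δ hsub; exact Prov.orI1 (ih hsub)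
  | orI2 _ ih => intro Δ hsub; exact Prov.orI2 (ih hsub)
  | orE _ _ _ ih1 ih2 ih3 =>
      intro Δ hsub
      exact Prov.orE (ih1 hsub) (ih2 (Set.insert_subset_insert hsub))
        (ih3 (Set.insert_subset_insert hsub))
  | impI _ ih => intro Δ hsub; exact Prov.impI (ih (Set.insert_subset_insert hsub))
  | impE _ _ ih1 ih2 => intro Δ hsub; exact Prov.impE (ih1 hsub) (ih2 hsub)
  | em hcl => intro Δ _; exact Prov.em hcl

theorem Prov.cut {V : Type} {cl : Prop} {Γ : Set (PropForm V)} {φ ψ : PropForm V}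
    (h1 : Prov cl Γ φ) (h2 : Prov cl (insert φ Γ) ψ) : Prov cl Γ ψ :=
  Prov.impE (Prov.impI h2) h1

/-- Single-premise consequence: `φ ⊢ ψ` (intuitionistic when `cl = False`). -/
def Entails {V : Type} (cl : Prop) (φ ψ : PropForm V) : Prop := Prov cl {φ} ψ

theorem Entails.refl {V : Type} {cl : Prop} (φ : PropForm V) : Entails cl φ φ := Prov.ax rfl

theorem Entails.trans' {V : Type} {cl : Prop} {φ ψ χ : PropForm V}
    (h1 : Entails cl φ ψ) (h2 : Entails cl ψ χ) : Entails cl φ χ :=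
  Prov.cut h1 (h2.mono (Set.singleton_subset_iff.mpr (Set.mem_insert _ _)))

theorem Entails.and_congr {V : Type} {cl : Prop} {a b c d : PropForm V}
    (h1 : Entails cl a b) (h2 : Entails cl c d) :
    Entails cl (PropForm.and a c) (PropForm.and b d) := by
  have ha : Prov cl ({PropForm.and a c} : Set (PropForm V)) a := Prov.andE1 (Prov.ax rfl)
  have hc : Prov cl ({PropForm.and a c} : Set (PropForm V)) c := Prov.andE2 (Prov.ax rfl)
  exact Prov.andI
    (Prov.cut ha (h1.mono (Set.singleton_subset_iff.mpr (Set.mem_insert _ _))))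
    (Prov.cut hc (h2.mono (Set.singleton_subset_iff.mpr (Set.mem_insert _ _))))

theorem Entails.or_congr {V : Type} {cl : Prop} {a b c d : PropForm V}
    (h1 : Entails cl a b) (h2 : Entails cl c d) :
    Entails cl (PropForm.or a c) (PropForm.or b d) :=
  Prov.orE (Prov.ax rfl)
    (Prov.orI1 (h1.mono (Set.singleton_subset_iff.mpr (Set.mem_insert _ _))))
    (Prov.orI2 (h2.mono (Set.singleton_subset_iff.mpr (Set.mem_insert _ _))))

/-- Logical equivalence (intuitionistic when `cl = False`, classical when `cl = True`). -/
def provSetoid (cl : Prop) (V : Type) : Setoid (PropForm V) where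
  r φ ψ := Entails cl φ ψ ∧ Entails cl ψ φ
  iseqv := ⟨fun φ => ⟨Entails.refl φ, Entails.refl φ⟩, fun h => ⟨h.2, h.1⟩,
    fun h1 h2 => ⟨h1.1.trans' h2.1, h2.2.trans' h1.2⟩⟩

/-- The Lindenbaum algebra of formulas over `V` modulo logical equivalence.
`Lindenbaum False (Fin n)` is the free Heyting algebra `H_n`,
`Lindenbaum False ℕ` is `H_ω`, and `Lindenbaum True ℕ` is the free Boolean
algebra `B_ω`. -/
def Lindenbaum (cl : Prop) (V : Type) : Type := Quotient (provSetoid cl V)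

/-- The equivalence class of a formula. -/
def Lindenbaum.mk (cl : Prop) {V : Type} (φ : PropForm V) : Lindenbaum cl V :=
  Quotient.mk (provSetoid cl V) φ

/-- The order of the Lindenbaum algebra: `[φ] ≤ [ψ]` iff `φ ⊢ ψ`. -/
def Lindenbaum.le {cl : Prop} {V : Type} : Lindenbaum cl V → Lindenbaum cl V → Prop :=
  Quotient.lift₂ (Entails cl) (by
    intro a b a' b' ha hb
    obtain ⟨ha1, ha2⟩ := ha
    obtain ⟨hb1, hb2⟩ := hb
    exact propext ⟨fun h => (ha2.trans' h).trans' hb1, fun h => (ha1.trans' h).trans' hb2⟩)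

/-- The meet `∧` of the Lindenbaum algebra. -/
def Lindenbaum.inf {cl : Prop} {V : Type} :
    Lindenbaum cl V → Lindenbaum cl V → Lindenbaum cl V :=
  Quotient.map₂ PropForm.and (by
    intro a a' ha b b' hb
    obtain ⟨ha1, ha2⟩ := ha
    obtain ⟨hb1, hb2⟩ := hb
    exact ⟨ha1.and_congr hb1, ha2.and_congr hb2⟩)

/-- The join `∨` of the Lindenbaum algebra. -/
def Lindenbaum.sup {cl : Prop} {V : Type} :
    Lindenbaum cl V → Lindenbaum cl V → Lindenbaum cl V :=
  Quotient.map₂ PropForm.or (by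
    intro a a' ha b b' hb
    obtain ⟨ha1, ha2⟩ := ha
    obtain ⟨hb1, hb2⟩ := hb
    exact ⟨ha1.or_congr hb1, ha2.or_congr hb2⟩)


/-! ### Prime theories -/

theorem Prov.finite_support {V : Type} {cl : Prop} {Γ : Set (PropForm V)} {φ : PropForm V}
    (h : Prov cl Γ φ) : ∃ Δ : Set (PropForm V), Δ.Finite ∧ Δ ⊆ Γ ∧ Prov cl Δ φ := by
  induction h with
  | @ax Γ φ hm => exact ⟨{φ}, Set.finite_singleton _, by simpa using hm, Prov.ax rfl⟩
  | topI => exact ⟨∅, Set.finite_empty, Set.empty_subset _, Prov.topI⟩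
  | botE _ ih => obtain ⟨Δ, hf, hs, hp⟩ := ih; exact ⟨Δ, hf, hs, Prov.botE hp⟩
  | andI _ _ ih1 ih2 =>
      obtain ⟨Δ, hf, hs, hp⟩ := ih1
      obtain ⟨Δ₁, hf₁, hs₁, hp₁⟩ := ih2
      exact ⟨Δ ∪ Δ₁, hf.union hf₁, Set.union_subset hs hs₁,
        Prov.andI (hp.mono Set.subset_union_left) (hp₁.mono Set.subset_union_right)⟩
  | andE1 _ ih => obtain ⟨Δ, hf, hs, hp⟩ := ih; exact ⟨Δ, hf, hs, Prov.andE1 hp⟩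
  | andE2 _ ih => obtain ⟨Δ, hf, hs, hp⟩ := ih; exact ⟨Δ, hf, hs, Prov.andE2 hp⟩
  | orI1 _ ih => obtain ⟨Δ, hf, hs, hp⟩ := ih; exact ⟨Δ, hf, hs, Prov.orI1 hp⟩
  | orI2 _ ih => obtain ⟨Δ, hf, hs, hp⟩ := ih; exact ⟨Δ, hf, hs, Prov.orI2 hp⟩
  | @orE Γ φ ψ χ _ _ _ ih1 ih2 ih3 =>
      obtain ⟨Δ, hf, hs, hp⟩ := ih1
      obtain ⟨Δ₁, hf₁, hs₁, hp₁⟩ := ih2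
      obtain ⟨Δ₂, hf₂, hs₂, hp₂⟩ := ih3
      refine ⟨Δ ∪ (Δ₁ \ {φ}) ∪ (Δ₂ \ {ψ}), (hf.union hf₁.sdiff).union hf₂.sdiff, ?_,
        Prov.orE (hp.mono ?_) (hp₁.mono ?_) (hp₂.mono ?_)⟩
      · rintro z ((hz | hz) | hz)
        · exact hs hz
        · exact (hs₁ hz.1).resolve_left hz.2
        · exact (hs₂ hz.1).resolve_left hz.2
      · exact fun z hz => Or.inl (Or.inl hz)
      · intro z hz
        by_cases h : z = φ
        · exact Or.inl h
        · exact Or.inr (Or.inl (Or.inr ⟨hz, h⟩))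
      · intro z hz
        by_cases h : z = ψ
        · exact Or.inl h
        · exact Or.inr (Or.inr ⟨hz, h⟩)
  | @impI Γ φ ψ _ ih =>
      obtain ⟨Δ, hf, hs, hp⟩ := ih
      refine ⟨Δ \ {φ}, hf.sdiff, fun z hz => (hs hz.1).resolve_left hz.2, Prov.impI (hp.mono ?_)⟩
      intro z hz
      by_cases h : z = φ
      · exact Or.inl h
      · exact Or.inr ⟨hz, h⟩
  | impE _ _ ih1 ih2 =>
      obtain ⟨Δ, hf, hs, hp⟩ := ih1
      obtain ⟨Δ₁, hf₁, hs₁, hp₁⟩ := ih2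
      exact ⟨Δ ∪ Δ₁, hf.union hf₁, Set.union_subset hs hs₁,
        Prov.impE (hp.mono Set.subset_union_left) (hp₁.mono Set.subset_union_right)⟩
  | em hcl => exact ⟨∅, Set.finite_empty, Set.empty_subset _, Prov.em hcl⟩

/-- A prime theory of intuitionistic logic in countably many variables: a consistent, deductively
closed set of formulas with the disjunction property. -/
structure PrimeTheory where
  /-- The formulas in the theory. -/
  carrier : Set (PropForm ℕ)
  closed : ∀ {φ}, IProv carrier φ → φ ∈ carrier
  consistent : PropForm.bot ∉ carrier
  prime : ∀ {φ ψ}, PropForm.or φ ψ ∈ carrier → φ ∈ carrier ∨ ψ ∈ carrier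

/-- A set not proving `ψ` that is maximal with this property is a prime theory. -/
theorem exists_primeTheory {Γ : Set (PropForm ℕ)} {ψ : PropForm ℕ} (h : ¬ IProv Γ ψ) :
    ∃ S : PrimeTheory, Γ ⊆ S.carrier ∧ ψ ∉ S.carrier := by
  obtain ⟨M, hΓM, hM⟩ := zorn_subset_nonempty {Δ : Set (PropForm ℕ) | ¬ IProv Δ ψ} (by
    intro C hC hchain hne
    refine ⟨⋃₀ C, ?_, fun s hs => Set.subset_sUnion_of_mem hs⟩
    intro hp
    obtain ⟨Δ, hf, hs, hp⟩ := hp.finite_support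
    obtain ⟨t, htC, ht⟩ := DirectedOn.exists_mem_subset_of_finite_of_subset_sUnion
      hne hchain.directedOn hf hs
    exact hC htC (hp.mono ht)) Γ h
  have hMψ : ¬ IProv M ψ := hM.prop
  have key : ∀ φ, φ ∉ M → IProv (insert φ M) ψ := by
    intro φ hφ
    by_contra hn
    exact hφ (hM.le_of_ge (y := insert φ M) hn (Set.subset_insert _ _) (Set.mem_insert _ _))
  have hclosed : ∀ {φ}, IProv M φ → φ ∈ M := by
    intro φ hp
    by_contra hφ
    exact hMψ (hp.cut (key φ hφ))
  refine ⟨⟨M, hclosed, fun hb => hMψ (Prov.botE (Prov.ax hb)), ?_⟩, hΓM,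
    fun hψ => hMψ (Prov.ax hψ)⟩
  intro φ χ hor
  by_contra! hn
  exact hMψ (Prov.orE (Prov.ax hor) (key _ hn.1) (key _ hn.2))

/-! ### Kripke semantics -/

/-- Kripke forcing over a preorder of worlds, `val p w` meaning that `p` is true at `w`. -/
def Force {V P : Type} [Preorder P] (val : V → P → Prop) : P → PropForm V → Prop
  | w, .var p => val p w
  | _, .bot => False
  | _, .top => True
  | w, .and φ ψ => Force val w φ ∧ Force val w ψ
  | w, .or φ ψ => Force val w φ ∨ Force val w ψ
  | w, .imp φ ψ => ∀ v, w ≤ v → Force val v φ → Force val v ψ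

theorem Force.mono {V P : Type} [Preorder P] {val : V → P → Prop}
    (hval : ∀ p w v, w ≤ v → val p w → val p v) (φ : PropForm V) :
    ∀ {w v : P}, w ≤ v → Force val w φ → Force val v φ := by
  induction φ with
  | var p => intro w v h hw; exact hval p w v h hw
  | bot => intro w v _ hw; exact hw
  | top => intro w v _ hw; exact hw
  | and φ ψ ih1 ih2 => intro w v h hw; exact ⟨ih1 h hw.1, ih2 h hw.2⟩
  | or φ ψ ih1 ih2 => intro w v h hw; exact hw.imp (ih1 h) (ih2 h)
  | imp φ ψ _ _ => intro w v h hw u hu; exact hw u (h.trans hu)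

theorem Prov.sound {V P : Type} [Preorder P] {val : V → P → Prop}
    (hval : ∀ p w v, w ≤ v → val p w → val p v) {Γ : Set (PropForm V)} {φ : PropForm V}
    (h : Prov False Γ φ) : ∀ w : P, (∀ γ ∈ Γ, Force val w γ) → Force val w φ := by
  induction h with
  | ax hm => intro w hw; exact hw _ hm
  | topI => intro w _; trivial
  | botE _ ih => intro w hw; exact (ih w hw).elim
  | andI _ _ ih1 ih2 => intro w hw; exact ⟨ih1 w hw, ih2 w hw⟩
  | andE1 _ ih => intro w hw; exact (ih w hw).1
  | andE2 _ ih => intro w hw; exact (ih w hw).2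
  | orI1 _ ih => intro w hw; exact Or.inl (ih w hw)
  | orI2 _ ih => intro w hw; exact Or.inr (ih w hw)
  | orE _ _ _ ih1 ih2 ih3 =>
      intro w hw
      rcases ih1 w hw with h | h
      · exact ih2 w (Set.forall_mem_insert.mpr ⟨h, hw⟩)
      · exact ih3 w (Set.forall_mem_insert.mpr ⟨h, hw⟩)
  | impI _ ih =>
      intro w hw v hv h
      exact ih v (Set.forall_mem_insert.mpr ⟨h, fun γ hγ => Force.mono hval γ hv (hw γ hγ)⟩)
  | impE _ _ ih1 ih2 => intro w hw; exact ih1 w hw w le_rfl (ih2 w hw)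
  | em hcl => exact hcl.elim

/-! ### The translation -/

/-- The first variable, `x`. -/
abbrev fx : PropForm (Fin 2) := .var 0

/-- The second variable, `y`. -/
abbrev fy : PropForm (Fin 2) := .var 1

/-- Negation. -/
abbrev fneg (φ : PropForm (Fin 2)) : PropForm (Fin 2) := .imp φ .bot

/-- The formula `a = ¬(x ∧ y) ∨ ¬¬y`, the image of `⊥`. -/
def fa : PropForm (Fin 2) := .or (fneg (.and fx fy)) (fneg (fneg fy))

/-- Rieger-Nishimura formulas in `x`; the `n`-th one is true exactly on the rungs of the ladder
seen by rung `n`. -/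
def rn : ℕ → PropForm (Fin 2)
  | 0 => fx
  | 1 => fneg fx
  | 2 => fneg (fneg fx)
  | n + 3 => .imp (rn (n + 2)) (.or (rn (n + 1)) (rn n))

/-- The formula `rn n ∨ rn (n + 1)`, true exactly on the rungs `0, …, n + 1` of the ladder. -/
def rungs (n : ℕ) : PropForm (Fin 2) := .or (rn n) (rn (n + 1))

/-- The formula `θₙ = ¬(x ∧ y) ∧ (¬y → rungs (n + 1)) → (¬y → rungs n) ∨ y ∨ ¬y`.  Outside the
canonical part of the model it fails only at the point `c n`, which sees `n + 2` as its last rung;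
the conjunct `¬(x ∧ y)` fails at all prime theories. -/
def theta (n : ℕ) : PropForm (Fin 2) :=
  .imp (.and (fneg (.and fx fy)) (.imp (fneg fy) (rungs (n + 1))))
    (.or (.imp (fneg fy) (rungs n)) (.or fy (fneg fy)))

/-- The substitution of `a` for `⊥` and of `θₙ ∨ a` for the `n`-th variable. -/
def tr : PropForm ℕ → PropForm (Fin 2)
  | .var n => .or (theta n) fa
  | .bot => fa
  | .top => .top
  | .and φ ψ => .and (tr φ) (tr ψ)
  | .or φ ψ => .or (tr φ) (tr ψ)
  | .imp φ ψ => .imp (tr φ) (tr ψ)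

theorem tr_of_fa (φ : PropForm ℕ) :
    ∀ {Γ : Set (PropForm (Fin 2))}, IProv Γ fa → IProv Γ (tr φ) := by
  induction φ with
  | var n => intro Γ h; exact Prov.orI2 h
  | bot => intro Γ h; exact h
  | top => intro Γ _; exact Prov.topI
  | and φ ψ ih1 ih2 => intro Γ h; exact Prov.andI (ih1 h) (ih2 h)
  | or φ ψ ih1 _ => intro Γ h; exact Prov.orI1 (ih1 h)
  | imp φ ψ _ ih2 => intro Γ h; exact Prov.impI (ih2 (h.mono (Set.subset_insert _ _)))

theorem Prov.tr {Γ : Set (PropForm ℕ)} {φ : PropForm ℕ} (h : Prov False Γ φ) :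
    Prov False (Set.image tr Γ) (tr φ) := by
  induction h with
  | ax hm => exact Prov.ax (Set.mem_image_of_mem _ hm)
  | topI => exact Prov.topI
  | botE _ ih => exact tr_of_fa _ ih
  | andI _ _ ih1 ih2 => exact Prov.andI ih1 ih2
  | andE1 _ ih => exact Prov.andE1 ih
  | andE2 _ ih => exact Prov.andE2 ih
  | orI1 _ ih => exact Prov.orI1 ih
  | orI2 _ ih => exact Prov.orI2 ih
  | orE _ _ _ ih1 ih2 ih3 =>
      rw [Set.image_insert_eq] at ih2 ih3
      exact Prov.orE ih1 ih2 ih3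
  | impI _ ih =>
      rw [Set.image_insert_eq] at ih
      exact Prov.impI ih
  | impE _ _ ih1 ih2 => exact Prov.impE ih1 ih2
  | em hcl => exact hcl.elim

theorem Entails.tr {φ ψ : PropForm ℕ} (h : Entails False φ ψ) :
    Entails False (tr φ) (tr ψ) := by
  have := Prov.tr h
  rwa [Set.image_singleton] at this

/-! ### The two-variable Kripke model -/

/-- The worlds of the two-variable Kripke model. -/
inductive World : Type
  | canon : PrimeTheory → World
  | e : World
  | beta : World
  | ladder : ℕ → World
  | c : ℕ → World

/-- The accessibility relation: `World.le w v` says that `w` sees `v`. -/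
def World.le : World → World → Prop
  | .canon S, .canon T => S.carrier ⊆ T.carrier
  | .canon S, .c n => PropForm.var n ∉ S.carrier
  | .canon _, _ => True
  | .e, .e => True
  | .beta, .beta => True
  | .ladder n, .ladder m => m = n ∨ m + 2 ≤ n
  | .c n, .c m => n = m
  | .c _, .beta => True
  | .c n, .ladder k => k ≤ n + 2
  | _, _ => False

instance : Preorder World where
  le := World.le
  le_refl w := by cases w <;> simp [World.le]
  le_trans u v w huv hvw := by
    cases u <;> cases v <;> cases w <;> simp only [World.le] at huv hvw ⊢ <;>
      first
        | exact huv.trans hvw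
        | exact fun h => hvw (huv h)
        | exact hvw ▸ huv
        | omega

/-- The valuation: `x` holds at `e` and at rung `0`, and `y` holds at `e` and at `beta`. -/
def wval (p : Fin 2) : World → Prop
  | .canon _ => False
  | .e => True
  | .beta => p = 1
  | .ladder n => p = 0 ∧ n = 0
  | .c _ => False

theorem wval_mono (p : Fin 2) (w v : World) (h : w ≤ v) (hw : wval p w) : wval p v := by
  change World.le w v at h
  cases w <;> cases v <;> simp_all [wval, World.le]

theorem ladder_le {k : ℕ} {v : World} :
    World.ladder k ≤ v ↔ ∃ j, v = .ladder j ∧ (j = k ∨ j + 2 ≤ k) := by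
  change World.le _ _ ↔ _
  cases v <;> simp [World.le]

theorem force_ladder_imp {k : ℕ} {φ ψ : PropForm (Fin 2)} :
    Force wval (.ladder k) (.imp φ ψ) ↔
      ∀ j, (j = k ∨ j + 2 ≤ k) → Force wval (.ladder j) φ → Force wval (.ladder j) ψ := by
  simp only [Force, ladder_le]
  constructor
  · intro h j hj
    exact h _ ⟨j, rfl, hj⟩
  · rintro h _ ⟨j, rfl, hj⟩
    exact h j hj

theorem force_rn (n : ℕ) : ∀ k, Force wval (.ladder k) (rn n) ↔ (k = n ∨ k + 2 ≤ n) := by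
  have h0 : ∀ k, Force wval (.ladder k) fx ↔ k = 0 := by intro k; simp [Force, wval]
  have h1 : ∀ k, Force wval (.ladder k) (fneg fx) ↔ k = 1 := by
    intro k
    rw [force_ladder_imp]
    simp only [h0]
    constructor
    · intro h
      have a : ¬ (0 = k ∨ 0 + 2 ≤ k) := fun q => h 0 q rfl
      omega
    · intro h j hj hj0
      exfalso
      omega
  induction n using Nat.strong_induction_on with
  | _ n ih =>
    match n, ih with
    | 0, _ => intro k; rw [rn, h0]; omega
    | 1, _ => intro k; rw [rn, h1]; omega
    | 2, _ =>
      intro k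
      rw [rn, force_ladder_imp]
      simp only [h1]
      constructor
      · intro h
        have a : ¬ (1 = k ∨ 1 + 2 ≤ k) := fun q => h 1 q rfl
        omega
      · intro h j hj hj0
        exfalso
        omega
    | n + 3, ih =>
      intro k
      rw [rn, force_ladder_imp]
      simp only [Force, ih (n + 2) (by omega), ih (n + 1) (by omega), ih n (by omega)]
      constructor
      · intro h
        have a := h (n + 2)
        omega
      · intro h j hj hj0
        omega

theorem force_rungs (n k : ℕ) : Force wval (.ladder k) (rungs n) ↔ k ≤ n + 1 := by
  simp only [rungs, Force, force_rn]
  omega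

theorem force_ladder_neg_y (k : ℕ) : Force wval (.ladder k) (fneg fy) := by
  rw [force_ladder_imp]
  intro j _ h
  simp [Force, wval] at h

theorem not_force_beta_neg_y : ¬ Force wval .beta (fneg fy) := by
  intro h
  exact h .beta le_rfl rfl

theorem c_le_ladder {m k : ℕ} : World.c m ≤ .ladder k ↔ k ≤ m + 2 := Iff.rfl

theorem not_force_c_neg_y (m : ℕ) : ¬ Force wval (.c m) (fneg fy) := by
  intro h
  exact h .beta trivial rfl

theorem force_c_rungs (m n : ℕ) :
    Force wval (.c m) (.imp (fneg fy) (rungs n)) ↔ m < n := by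
  constructor
  · intro h
    have := (force_rungs n (m + 2)).mp
      (h (.ladder (m + 2)) (c_le_ladder.mpr le_rfl) (force_ladder_neg_y _))
    omega
  · intro h v hv hy
    cases v with
    | canon S => exact hv.elim
    | e => exact hv.elim
    | beta => exact (not_force_beta_neg_y hy).elim
    | ladder k =>
      have := c_le_ladder.mp hv
      exact (force_rungs n k).mpr (by omega)
    | c j => exact (not_force_c_neg_y j hy).elim

/-- The point `e` is the only world where `x ∧ y` holds. -/
theorem force_neg_xy {w : World} (h : ¬ w ≤ .e) : Force wval w (fneg (.and fx fy)) := by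
  rintro v hv ⟨hx, hy⟩
  cases v with
  | canon S => exact hx
  | e => exact h hv
  | beta => simp [Force, wval] at hx
  | ladder k => simp [Force, wval] at hy
  | c j => exact hx

theorem force_c_theta (m n : ℕ) : Force wval (.c m) (theta n) ↔ m ≠ n := by
  constructor
  · rintro h rfl
    rcases h _ le_rfl ⟨force_neg_xy id, (force_c_rungs m (m + 1)).mpr (by omega)⟩ with h | h | h
    · exact absurd ((force_c_rungs m m).mp h) (by omega)
    · exact h
    · exact not_force_c_neg_y m h
  · rintro hmn v hv ⟨_, h⟩
    cases v with
    | canon S => exact hv.elim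
    | e => exact hv.elim
    | beta => exact Or.inr (Or.inl rfl)
    | ladder k => exact Or.inr (Or.inr (force_ladder_neg_y k))
    | c j =>
      obtain rfl : m = j := hv
      have := (force_c_rungs m (n + 1)).mp h
      exact Or.inl ((force_c_rungs m n).mpr (by omega))

theorem not_force_canon_neg_xy (S : PrimeTheory) :
    ¬ Force wval (.canon S) (fneg (.and fx fy)) :=
  fun h => h .e trivial ⟨trivial, trivial⟩

theorem force_canon_theta (S : PrimeTheory) (n : ℕ) :
    Force wval (.canon S) (theta n) ↔ PropForm.var n ∈ S.carrier := by
  constructor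
  · intro h
    by_contra hn
    have hle : World.canon S ≤ .c n := hn
    exact (force_c_theta n n).mp (Force.mono wval_mono _ hle h) rfl
  · rintro hn v hv ⟨h1, h2⟩
    cases v with
    | canon T => exact (not_force_canon_neg_xy T h1).elim
    | e => exact Or.inr (Or.inl trivial)
    | beta => exact Or.inr (Or.inl rfl)
    | ladder k => exact Or.inr (Or.inr (force_ladder_neg_y k))
    | c j =>
      have hj : PropForm.var j ∉ S.carrier := hv
      have hjn : j ≠ n := by rintro rfl; exact hj hn
      exact (force_c_theta j n).mpr hjn _ le_rfl ⟨h1, h2⟩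

/-- Prime theories refute `a`: they see `e`, where `x ∧ y` holds, and rung `0`, where `¬y` holds. -/
theorem not_force_canon_fa (S : PrimeTheory) : ¬ Force wval (.canon S) fa := by
  rintro (h | h)
  · exact not_force_canon_neg_xy S h
  · exact h (.ladder 0) trivial (force_ladder_neg_y 0)

theorem force_fa_of_ne {w : World} (h : ∀ S, w ≠ .canon S) : Force wval w fa := by
  cases w with
  | canon S => exact (h S rfl).elim
  | e =>
    right
    intro v hv hy
    cases v with
    | e => exact hy .e le_rfl trivial
    | _ => exact hv.elim
  | beta => exact Or.inl (force_neg_xy id)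
  | ladder k => exact Or.inl (force_neg_xy id)
  | c m => exact Or.inl (force_neg_xy id)

theorem force_tr_of_ne {w : World} (h : ∀ S, w ≠ .canon S) (φ : PropForm ℕ) :
    Force wval w (tr φ) :=
  (tr_of_fa φ (Prov.ax rfl : IProv {fa} fa)).sound wval_mono w
    (by rintro _ rfl; exact force_fa_of_ne h)

/-- The truth lemma for the canonical part of the model. -/
theorem force_tr (φ : PropForm ℕ) :
    ∀ S : PrimeTheory, Force wval (.canon S) (tr φ) ↔ φ ∈ S.carrier := by
  induction φ with
  | var n =>
    intro S
    rw [← force_canon_theta]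
    exact or_iff_left (not_force_canon_fa S)
  | bot =>
    intro S
    exact iff_of_false (not_force_canon_fa S) S.consistent
  | top =>
    intro S
    exact iff_of_true trivial (S.closed Prov.topI)
  | and φ ψ ih1 ih2 =>
    intro S
    refine (and_congr (ih1 S) (ih2 S)).trans ⟨fun h => ?_, fun h => ⟨?_, ?_⟩⟩
    · exact S.closed (Prov.andI (Prov.ax h.1) (Prov.ax h.2))
    · exact S.closed (Prov.andE1 (Prov.ax h))
    · exact S.closed (Prov.andE2 (Prov.ax h))
  | or φ ψ ih1 ih2 =>
    intro S
    refine (or_congr (ih1 S) (ih2 S)).trans ⟨?_, S.prime⟩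
    rintro (h | h)
    · exact S.closed (Prov.orI1 (Prov.ax h))
    · exact S.closed (Prov.orI2 (Prov.ax h))
  | imp φ ψ ih1 ih2 =>
    intro S
    constructor
    · intro h
      by_contra hn
      have hnp : ¬ IProv (insert φ S.carrier) ψ := fun hp => hn (S.closed (Prov.impI hp))
      obtain ⟨T, hT, hψ⟩ := exists_primeTheory hnp
      have hle : World.canon S ≤ .canon T := (Set.subset_insert _ _).trans hT
      exact hψ ((ih2 T).mp (h _ hle ((ih1 T).mpr (hT (Set.mem_insert _ _)))))
    · intro h v hv hφ
      by_cases hc : ∃ T, v = .canon T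
      · obtain ⟨T, rfl⟩ := hc
        have hST : S.carrier ⊆ T.carrier := hv
        exact (ih2 T).mpr
          (T.closed (Prov.impE (Prov.ax (hST h)) (Prov.ax ((ih1 T).mp hφ))))
      · exact force_tr_of_ne (not_exists.mp hc) ψ

theorem Entails.of_tr {φ ψ : PropForm ℕ} (h : Entails False (_root_.tr φ) (_root_.tr ψ)) :
    Entails False φ ψ := by
  by_contra hn
  obtain ⟨S, hS, hψ⟩ := exists_primeTheory hn
  refine hψ ((force_tr ψ S).mp (Prov.sound wval_mono h _ ?_))
  rintro _ rfl
  exact (force_tr φ S).mpr (hS rfl)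

/-- There is a lattice embedding of the free Heyting algebra `H_ω` on countably many
generators into the free Heyting algebra `H_2` on two generators: an injective map
preserving `∧` and `∨`. -/
theorem lattice_embedding_Homega_into_H2 :
    ∃ f : Lindenbaum False ℕ → Lindenbaum False (Fin 2),
      Function.Injective f ∧
      (∀ a b, f (Lindenbaum.inf a b) = Lindenbaum.inf (f a) (f b)) ∧
      (∀ a b, f (Lindenbaum.sup a b) = Lindenbaum.sup (f a) (f b)) := by
  refine ⟨Quotient.map tr fun _ _ h => ⟨h.1.tr, h.2.tr⟩, ?_, ?_, ?_⟩
  · rintro ⟨φ⟩ ⟨ψ⟩ h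
    have h' := Quotient.exact h
    exact Quotient.sound ⟨h'.1.of_tr, h'.2.of_tr⟩
  · rintro ⟨φ⟩ ⟨ψ⟩
    rfl
  · rintro ⟨φ⟩ ⟨ψ⟩
    rfl
end

section
/- There is a consequence-respecting and tautology-respecting, (∧,∨)-preserving translation from ω-variable intuitionistic propositional logic into 2-variable intuitionistic propositional logic: a function f : F_ω → F_2 such that for every nonempty Γ ⊆ F_ω and φ ∈ F_ω, Γ ⊢ φ iff f(Γ) ⊢ f(φ); for every φ, ⊢ φ iff ⊢ f(φ); and f(φ∧ψ) = f(φ)∧f(ψ) and f(φ∨ψ) = f(φ)∨f(ψ) for all φ, ψ. -/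
/-! ### Compactness and prime theories -/

theorem Prov.exists_finite {V : Type} {cl : Prop} {Γ : Set (PropForm V)} {φ : PropForm V}
    (h : Prov cl Γ φ) : ∃ Δ : Set (PropForm V), Δ ⊆ Γ ∧ Δ.Finite ∧ Prov cl Δ φ := by
  have split : ∀ {Γ Δ : Set (PropForm V)} {φ ψ : PropForm V}, Δ ⊆ insert φ Γ → Δ.Finite →
      Prov cl Δ ψ → ∃ Δ', Δ' ⊆ Γ ∧ Δ'.Finite ∧ Prov cl (insert φ Δ') ψ := by
    intro Γ Δ φ ψ hs hf hp
    refine ⟨Δ \ {φ}, ?_, hf.sdiff, hp.mono ?_⟩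
    · intro x hx
      rcases hs hx.1 with h | h
      · exact absurd h hx.2
      · exact h
    · intro x hx
      by_cases h : x = φ
      · exact Or.inl h
      · exact Or.inr ⟨hx, h⟩
  induction h with
  | @ax Γ φ hmem => exact ⟨{φ}, by simpa using hmem, Set.finite_singleton _, Prov.ax rfl⟩
  | topI => exact ⟨∅, Set.empty_subset _, Set.finite_empty, Prov.topI⟩
  | botE _ ih => obtain ⟨Δ, h1, h2, h3⟩ := ih; exact ⟨Δ, h1, h2, Prov.botE h3⟩
  | andI _ _ ih1 ih2 =>
    obtain ⟨Δ, h1, h2, h3⟩ := ih1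
    obtain ⟨Δ', h1', h2', h3'⟩ := ih2
    exact ⟨Δ ∪ Δ', Set.union_subset h1 h1', h2.union h2',
      Prov.andI (h3.mono Set.subset_union_left) (h3'.mono Set.subset_union_right)⟩
  | andE1 _ ih => obtain ⟨Δ, h1, h2, h3⟩ := ih; exact ⟨Δ, h1, h2, Prov.andE1 h3⟩
  | andE2 _ ih => obtain ⟨Δ, h1, h2, h3⟩ := ih; exact ⟨Δ, h1, h2, Prov.andE2 h3⟩
  | orI1 _ ih => obtain ⟨Δ, h1, h2, h3⟩ := ih; exact ⟨Δ, h1, h2, Prov.orI1 h3⟩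
  | orI2 _ ih => obtain ⟨Δ, h1, h2, h3⟩ := ih; exact ⟨Δ, h1, h2, Prov.orI2 h3⟩
  | orE _ _ _ ih1 ih2 ih3 =>
    obtain ⟨Δ, h1, h2, h3⟩ := ih1
    obtain ⟨A, a1, a2, a3⟩ := ih2
    obtain ⟨B, b1, b2, b3⟩ := ih3
    obtain ⟨A', a1', a2', a3'⟩ := split a1 a2 a3
    obtain ⟨B', b1', b2', b3'⟩ := split b1 b2 b3
    refine ⟨Δ ∪ (A' ∪ B'), Set.union_subset h1 (Set.union_subset a1' b1'),
      h2.union (a2'.union b2'), Prov.orE (h3.mono Set.subset_union_left)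
        (a3'.mono (Set.insert_subset_insert ?_)) (b3'.mono (Set.insert_subset_insert ?_))⟩
    · exact fun x hx => Or.inr (Or.inl hx)
    · exact fun x hx => Or.inr (Or.inr hx)
  | impI _ ih =>
    obtain ⟨A, a1, a2, a3⟩ := ih
    obtain ⟨A', a1', a2', a3'⟩ := split a1 a2 a3
    exact ⟨A', a1', a2', Prov.impI a3'⟩
  | impE _ _ ih1 ih2 =>
    obtain ⟨Δ, h1, h2, h3⟩ := ih1
    obtain ⟨Δ', h1', h2', h3'⟩ := ih2
    exact ⟨Δ ∪ Δ', Set.union_subset h1 h1', h2.union h2',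
      Prov.impE (h3.mono Set.subset_union_left) (h3'.mono Set.subset_union_right)⟩
  | em hcl => exact ⟨∅, Set.empty_subset _, Set.finite_empty, Prov.em hcl⟩

/-- A prime theory: a consistent, deductively closed set of formulas with the disjunction
property. -/
structure PrimeTheory_s7 (V : Type) where
  /-- The formulas of the theory. -/
  carrier : Set (PropForm V)
  closed : ∀ φ, IProv carrier φ → φ ∈ carrier
  consistent : PropForm.bot ∉ carrier
  prime : ∀ φ ψ, PropForm.or φ ψ ∈ carrier → φ ∈ carrier ∨ ψ ∈ carrier

/-- Lindenbaum's lemma: a set not proving `φ` extends to a prime theory omitting `φ`. -/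
theorem exists_primeTheory_s7 {V : Type} {Γ : Set (PropForm V)} {φ : PropForm V}
    (h : ¬ IProv Γ φ) : ∃ T : PrimeTheory_s7 V, Γ ⊆ T.carrier ∧ φ ∉ T.carrier := by
  obtain ⟨M, hΓM, hM⟩ := zorn_subset_nonempty {Δ : Set (PropForm V) | ¬ IProv Δ φ} (by
    intro c hc hchain hne
    refine ⟨⋃₀ c, ?_, fun s hs => Set.subset_sUnion_of_mem hs⟩
    intro hp
    obtain ⟨Δ, hΔ, hfin, hpr⟩ := Prov.exists_finite hp
    obtain ⟨s, hs, hsub⟩ :=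
      hchain.directedOn.exists_mem_subset_of_finset_subset_biUnion (f := id) hne
        (s := hfin.toFinset) (by simpa [Set.sUnion_eq_biUnion] using hΔ)
    exact hc hs (hpr.mono (by simpa using hsub))) Γ h
  have hMφ : ¬ IProv M φ := hM.prop
  -- By maximality, any formula outside `M` proves `φ` over `M`.
  have hmax : ∀ ψ, ψ ∉ M → IProv (insert ψ M) φ := by
    intro ψ hψ
    by_contra hcon
    exact hψ (hM.le_of_ge (y := insert ψ M) hcon (Set.subset_insert _ _) (Set.mem_insert _ _))
  refine ⟨⟨M, ?_, ?_, ?_⟩, hΓM, fun hmem => hMφ (Prov.ax hmem)⟩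
  · intro ψ hψ
    by_contra hcon
    exact hMφ (Prov.cut hψ (hmax ψ hcon))
  · exact fun hb => hMφ (Prov.botE (Prov.ax hb))
  · intro a b hab
    by_contra! hcon
    exact hMφ (Prov.orE (Prov.ax hab) (hmax a hcon.1) (hmax b hcon.2))

/-! ### Kripke semantics -/

/-- Kripke forcing with accessibility relation `R` and valuation `val`. -/
def Forces {V W : Type} (R : W → W → Prop) (val : W → V → Prop) : W → PropForm V → Prop
  | w, .var x => val w x
  | _, .bot => False
  | _, .top => True
  | w, .and φ ψ => Forces R val w φ ∧ Forces R val w ψ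
  | w, .or φ ψ => Forces R val w φ ∨ Forces R val w ψ
  | w, .imp φ ψ => ∀ v, R w v → Forces R val v φ → Forces R val v ψ

theorem Forces.persist {V W : Type} {R : W → W → Prop} {val : W → V → Prop}
    (htrans : ∀ u v w, R u v → R v w → R u w)
    (hval : ∀ u v x, R u v → val u x → val v x) (φ : PropForm V) :
    ∀ u v, R u v → Forces R val u φ → Forces R val v φ := by
  induction φ with
  | var x => exact fun u v h => hval u v x h
  | bot => exact fun u v _ h => h
  | top => exact fun u v _ h => h
  | and a b iha ihb => exact fun u v h hf => ⟨iha u v h hf.1, ihb u v h hf.2⟩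
  | or a b iha ihb => exact fun u v h hf => hf.imp (iha u v h) (ihb u v h)
  | imp a b _ _ => exact fun u v h hf w hw => hf w (htrans u v w h hw)

theorem Forces.sound {V W : Type} {R : W → W → Prop} {val : W → V → Prop}
    (hrefl : ∀ u, R u u) (htrans : ∀ u v w, R u v → R v w → R u w)
    (hval : ∀ u v x, R u v → val u x → val v x) {Γ : Set (PropForm V)} {φ : PropForm V}
    (h : IProv Γ φ) : ∀ w, (∀ ψ ∈ Γ, Forces R val w ψ) → Forces R val w φ := by
  have hins : ∀ {Γ : Set (PropForm V)} {φ : PropForm V} {w : W}, (∀ ψ ∈ Γ, Forces R val w ψ) →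
      Forces R val w φ → ∀ ψ ∈ insert φ Γ, Forces R val w ψ := by
    rintro Γ φ w h1 h2 ψ (rfl | h)
    · exact h2
    · exact h1 _ h
  induction h with
  | ax hmem => exact fun w hw => hw _ hmem
  | topI => exact fun w _ => trivial
  | botE _ ih => exact fun w hw => (ih w hw).elim
  | andI _ _ ih1 ih2 => exact fun w hw => ⟨ih1 w hw, ih2 w hw⟩
  | andE1 _ ih => exact fun w hw => (ih w hw).1
  | andE2 _ ih => exact fun w hw => (ih w hw).2
  | orI1 _ ih => exact fun w hw => Or.inl (ih w hw)
  | orI2 _ ih => exact fun w hw => Or.inr (ih w hw)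
  | orE _ _ _ ih1 ih2 ih3 =>
    exact fun w hw => (ih1 w hw).elim (fun h => ih2 w (hins hw h)) (fun h => ih3 w (hins hw h))
  | impI _ ih =>
    exact fun w hw v hv hf =>
      ih v (hins (fun ψ hψ => Forces.persist htrans hval ψ w v hv (hw ψ hψ)) hf)
  | impE _ _ ih1 ih2 => exact fun w hw => ih1 w hw w (hrefl w) (ih2 w hw)
  | em hcl => exact hcl.elim

/-! ### The translation -/

/-- The formula refuted exactly below the ladder point `pt c n`. -/
def ladder : ℕ → Fin 3 → PropForm (Fin 2)
  | 0, c => ![.imp (.var 0) (.var 1), .imp (.var 1) (.var 0),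
      .imp (.imp (.or (.var 0) (.var 1)) .bot) .bot] c
  | n + 1, c => .imp (ladder n c) (.or (ladder n (c + 1)) (ladder n (c + 2)))

/-- The formula refuted exactly below the antichain point `e n`. -/
def sep (n : ℕ) : PropForm (Fin 2) :=
  .imp (.and (ladder (n + 1) 0) (.and (ladder (n + 1) 1) (ladder (n + 1) 2)))
    (.or (ladder n 0) (.or (ladder n 1) (ladder n 2)))

/-- The two-variable formula playing the role of `⊥`. -/
def botForm : PropForm (Fin 2) :=
  .or (.and (.var 0) (.var 1)) (.imp (.and (.var 0) (.var 1)) .bot)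

/-- The translation: a substitution relative to the new bottom `botForm`. -/
def toTwo : PropForm ℕ → PropForm (Fin 2)
  | .var i => .or (sep i) botForm
  | .bot => botForm
  | .top => .top
  | .and φ ψ => .and (toTwo φ) (toTwo ψ)
  | .or φ ψ => .or (toTwo φ) (toTwo ψ)
  | .imp φ ψ => .imp (toTwo φ) (toTwo ψ)

theorem toTwo_of_botForm (φ : PropForm ℕ) :
    ∀ {Γ : Set (PropForm (Fin 2))}, IProv Γ botForm → IProv Γ (toTwo φ) := by
  induction φ with
  | var i => exact fun h => Prov.orI2 h
  | bot => exact fun h => h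
  | top => exact fun _ => Prov.topI
  | and a b iha ihb => exact fun h => Prov.andI (iha h) (ihb h)
  | or a b iha _ => exact fun h => Prov.orI1 (iha h)
  | imp a b _ ihb => exact fun h => Prov.impI (ihb (h.mono (Set.subset_insert _ _)))

theorem Prov.toTwo {Γ : Set (PropForm ℕ)} {φ : PropForm ℕ} (h : IProv Γ φ) :
    IProv (toTwo '' Γ) (toTwo φ) := by
  induction h with
  | ax hmem => exact Prov.ax (Set.mem_image_of_mem _ hmem)
  | topI => exact Prov.topI
  | botE _ ih => exact toTwo_of_botForm _ ih
  | andI _ _ ih1 ih2 => exact Prov.andI ih1 ih2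
  | andE1 _ ih => exact Prov.andE1 ih
  | andE2 _ ih => exact Prov.andE2 ih
  | orI1 _ ih => exact Prov.orI1 ih
  | orI2 _ ih => exact Prov.orI2 ih
  | orE _ _ _ ih1 ih2 ih3 =>
    rw [Set.image_insert_eq] at ih2 ih3
    exact Prov.orE ih1 ih2 ih3
  | impI _ ih =>
    rw [Set.image_insert_eq] at ih
    exact Prov.impI ih
  | impE _ _ ih1 ih2 => exact Prov.impE ih1 ih2
  | em hcl => exact hcl.elim

/-! ### The two-variable Kripke model -/

/-- The worlds of the model: prime theories, the antichain `e n`, the ladder points `pt c n` at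
level `n`, and the maximal point `g`. -/
inductive World_s7 : Type
  | th : PrimeTheory_s7 ℕ → World_s7
  | e : ℕ → World_s7
  | pt : Fin 3 → ℕ → World_s7
  | g : World_s7

namespace World_s7

/-- The accessibility order.  A theory sees `e i` iff it omits the `i`-th variable, and sees the
ladder points above those `e i`. -/
def le_s7 : World_s7 → World_s7 → Prop
  | th T, th T' => T.carrier ⊆ T'.carrier
  | th T, e i => PropForm.var i ∉ T.carrier
  | th T, pt _ n => ∃ i, n ≤ i ∧ PropForm.var i ∉ T.carrier
  | th _, g => True
  | e m, e n => m = n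
  | e m, pt _ n => n ≤ m
  | pt c m, pt d n => (c = d ∧ m = n) ∨ (m = n + 1 ∧ c ≠ d) ∨ n + 2 ≤ m
  | g, g => True
  | _, _ => False

/-- The valuation: `x₁` holds at `pt 0 0` and `g`, and `x₂` holds at `pt 1 0` and `g`. -/
def val : World_s7 → Fin 2 → Prop
  | pt 0 0, x => x = 0
  | pt 1 0, x => x = 1
  | g, _ => True
  | _, _ => False

theorem le_refl (u : World_s7) : le_s7 u u := by
  cases u <;> simp [le_s7]

theorem le_trans (u v w : World_s7) (h1 : le_s7 u v) (h2 : le_s7 v w) : le_s7 u w := by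
  cases u <;> cases v <;> cases w <;> simp only [le_s7] at h1 h2 ⊢ <;> grind

theorem val_mono (u v : World_s7) (x : Fin 2) (h : le_s7 u v) (hu : val u x) : val v x := by
  cases u <;> cases v <;> simp only [le_s7, val] at h hu ⊢ <;> grind [val]

theorem val_zero (v : World_s7) : val v 0 ↔ v = pt 0 0 ∨ v = g := by
  unfold val; split <;> simp_all

theorem val_one (v : World_s7) : val v 1 ↔ v = pt 1 0 ∨ v = g := by
  unfold val; split <;> simp_all

/-- The only world seeing the two ladder points of level `n` other than `pt c n`, but not
`pt c n`, is `pt c (n + 1)`. -/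
theorem ladder_cover (v : World_s7) (c : Fin 3) (n : ℕ) :
    (¬ le_s7 v (pt c n) ∧ le_s7 v (pt (c + 1) n) ∧ le_s7 v (pt (c + 2) n)) ↔ v = pt c (n + 1) := by
  cases v with
  | th T => simp only [le_s7]; simp
  | e m => simp only [le_s7]; simp
  | g => simp [le_s7]
  | pt d m =>
    simp only [le_s7, pt.injEq]
    fin_cases c <;> fin_cases d <;> simp <;> omega

theorem forces_ladder (n : ℕ) : ∀ (c : Fin 3) (w : World_s7),
    Forces le_s7 val w (ladder n c) ↔ ¬ le_s7 w (pt c n) := by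
  induction n with
  | zero =>
    intro c w
    have reduce : ∀ p : World_s7, (∀ v, le_s7 w v → v ≠ p) ↔ ¬ le_s7 w p := fun p =>
      ⟨fun h hle => h _ hle rfl, fun h v hv hveq => h (hveq ▸ hv)⟩
    fin_cases c
    · rw [← reduce]
      refine forall_congr' fun v => imp_congr_right fun _ => ?_
      simp only [Forces, val_zero, val_one]
      grind
    · rw [← reduce]
      refine forall_congr' fun v => imp_congr_right fun _ => ?_
      simp only [Forces, val_zero, val_one]
      grind
    · change (∀ v, le_s7 w v → (∀ u, le_s7 v u → val u 0 ∨ val u 1 → False) → False) ↔ ¬ le_s7 w (pt 2 0)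
      simp only [val_zero, val_one]
      constructor
      · intro h hle
        refine h _ hle fun u hu => ?_
        rcases u with _ | _ | ⟨d, m⟩ | _ <;> simp only [le_s7] at hu
        grind
      · intro h v hv hcon
        have hv2 : ¬ le_s7 v (pt 2 0) := fun hle => h (le_trans w v _ hv hle)
        cases v with
        | th T => exact hcon g trivial (by simp)
        | e m => exact hv2 (Nat.zero_le m)
        | g => exact hcon g trivial (by simp)
        | pt d m =>
          -- Only `pt 0 0`, `pt 1 0` and `pt 2 1` are not below `pt 2 0`; all three see
          -- `pt 0 0` or `pt 1 0`.
          have h0 := hcon (pt 0 0)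
          have h1 := hcon (pt 1 0)
          simp only [le_s7] at hv2 h0 h1
          fin_cases d <;> simp at hv2 h0 h1 <;> omega
  | succ n ih =>
    intro c w
    have key : Forces le_s7 val w (ladder (n + 1) c) ↔ ∀ v, le_s7 w v → v ≠ pt c (n + 1) := by
      simp only [ladder, Forces, ih]
      refine forall_congr' fun v => imp_congr_right fun _ => ?_
      rw [Ne, ← ladder_cover]
      tauto
    rw [key]
    exact ⟨fun h hle => h _ hle rfl, fun h v hv hveq => h (hveq ▸ hv)⟩

theorem forces_sep (n : ℕ) (w : World_s7) : Forces le_s7 val w (sep n) ↔ ¬ le_s7 w (e n) := by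
  simp only [sep, Forces, forces_ladder]
  constructor
  · intro h hle
    have := h _ hle
    simp [le_s7] at this
  · intro h v hv hsucc
    by_contra hcon
    apply h
    refine le_trans w v _ hv ?_
    cases v with
    | th T =>
      simp only [le_s7] at hsucc hcon ⊢
      push Not at hsucc hcon
      obtain ⟨i, hi, hiT⟩ := hcon.1
      have : i = n := by
        by_contra hne
        exact hiT (hsucc.1 i (by omega))
      exact this ▸ hiT
    | e m => simp only [le_s7] at hsucc hcon ⊢; omega
    | g => simp [le_s7] at hcon
    | pt d m =>
      simp only [le_s7] at hsucc hcon
      fin_cases d <;> simp at hsucc hcon <;> omega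

theorem forces_botForm_iff (w : World_s7) : Forces le_s7 val w botForm ↔ ∀ T, w ≠ th T := by
  simp only [botForm, Forces, val_zero, val_one]
  cases w with
  | th T =>
    refine iff_of_false ?_ (fun h => h T rfl)
    rintro (h | h)
    · simp at h
    · exact h g trivial (by simp)
  | e m => refine iff_of_true (Or.inr ?_) (by simp); rintro (_ | _ | _ | _) <;> simp [le_s7] <;> grind
  | pt c m => refine iff_of_true (Or.inr ?_) (by simp); rintro (_ | _ | _ | _) <;> simp [le_s7] <;> grind
  | g => simp

theorem forces_toTwo_of_ne (φ : PropForm ℕ) (w : World_s7) (hw : ∀ T, w ≠ th T) :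
    Forces le_s7 val w (toTwo φ) :=
  Forces.sound le_refl le_trans val_mono (toTwo_of_botForm φ (Prov.ax (Set.mem_singleton _))) w
    (by rintro ψ rfl; exact (forces_botForm_iff w).2 hw)

/-- Truth lemma: a prime theory forces the translations of exactly its own members. -/
theorem forces_toTwo_th (φ : PropForm ℕ) :
    ∀ T : PrimeTheory_s7 ℕ, Forces le_s7 val (th T) (toTwo φ) ↔ φ ∈ T.carrier := by
  have hbot : ∀ T, ¬ Forces le_s7 val (th T) botForm := fun T h =>
    (forces_botForm_iff _).1 h T rfl
  induction φ with
  | var i =>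
    intro T
    simp only [toTwo, Forces, hbot, forces_sep, or_false]
    simp [le_s7]
  | bot => exact fun T => iff_of_false (hbot T) T.consistent
  | top => exact fun T => iff_of_true trivial (T.closed _ Prov.topI)
  | and a b iha ihb =>
    intro T
    simp only [toTwo, Forces, iha, ihb]
    exact ⟨fun h => T.closed _ (Prov.andI (Prov.ax h.1) (Prov.ax h.2)),
      fun h => ⟨T.closed _ (Prov.andE1 (Prov.ax h)), T.closed _ (Prov.andE2 (Prov.ax h))⟩⟩
  | or a b iha ihb =>
    intro T
    simp only [toTwo, Forces, iha, ihb]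
    exact ⟨fun h => h.elim (fun h => T.closed _ (Prov.orI1 (Prov.ax h)))
      (fun h => T.closed _ (Prov.orI2 (Prov.ax h))), T.prime a b⟩
  | imp a b iha ihb =>
    intro T
    simp only [toTwo, Forces]
    constructor
    · intro h
      by_contra hcon
      have hnot : ¬ IProv (insert a T.carrier) b := fun hp => hcon (T.closed _ (Prov.impI hp))
      obtain ⟨T', hsub, hb⟩ := exists_primeTheory_s7 hnot
      exact hb ((ihb T').1 (h (th T') (fun x hx => hsub (Or.inr hx))
        ((iha T').2 (hsub (Or.inl rfl)))))
    · intro h v hv ha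
      by_cases hth : ∃ T', v = th T'
      · obtain ⟨T', rfl⟩ := hth
        exact (ihb T').2 (T'.closed _ (Prov.impE (Prov.ax (hv h)) (Prov.ax ((iha T').1 ha))))
      · exact forces_toTwo_of_ne b v (fun T' heq => hth ⟨T', heq⟩)

end World_s7

theorem iprov_iff_toTwo (Γ : Set (PropForm ℕ)) (φ : PropForm ℕ) :
    IProv Γ φ ↔ IProv (toTwo '' Γ) (toTwo φ) := by
  refine ⟨Prov.toTwo, fun h => ?_⟩
  by_contra hcon
  obtain ⟨T, hΓ, hφ⟩ := exists_primeTheory_s7 hcon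
  refine hφ ((World_s7.forces_toTwo_th φ T).1
    (Forces.sound World_s7.le_refl World_s7.le_trans World_s7.val_mono h (World_s7.th T) ?_))
  rintro _ ⟨ψ, hψ, rfl⟩
  exact (World_s7.forces_toTwo_th ψ T).2 (hΓ hψ)

/-- There is a consequence- and tautology-respecting, `(∧,∨)`-preserving translation from
`ω`-variable intuitionistic logic into `2`-variable intuitionistic logic. -/
theorem exists_fully_respecting_translation_omega_to_two :
    ∃ f : PropForm ℕ → PropForm (Fin 2),
      (∀ Γ : Set (PropForm ℕ), Γ.Nonempty →
        ∀ φ : PropForm ℕ, (IProv Γ φ ↔ IProv (f '' Γ) (f φ))) ∧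
      (∀ φ : PropForm ℕ, (IProv (∅ : Set (PropForm ℕ)) φ ↔
        IProv (∅ : Set (PropForm (Fin 2))) (f φ))) ∧
      (∀ φ ψ : PropForm ℕ, f (PropForm.and φ ψ) = PropForm.and (f φ) (f ψ)) ∧
      (∀ φ ψ : PropForm ℕ, f (PropForm.or φ ψ) = PropForm.or (f φ) (f ψ)) := by
  exact ⟨toTwo, fun Γ _ φ => iprov_iff_toTwo Γ φ,
    fun φ => by simpa using iprov_iff_toTwo ∅ φ, fun _ _ => rfl, fun _ _ => rfl⟩
end
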